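/- Let f be in the class 𝓕 and let n ≥ 2. Then the n-th section s_n(f) is injective (univalent) on the disk |z| < 1/3. -/

import Mathlib

open Complex Metric

/-- The class 𝓕 of normalized locally univalent analytic functions on the unit disk
satisfying `Re (1 + z f''(z)/f'(z)) > -1/2`. -/
def IsInClassF (f : ℂ → ℂ) : Prop :=
  AnalyticOnNhd ℂ f (ball (0 : ℂ) 1) ∧ f 0 = 0 ∧ deriv f 0 = 1 ∧
    (∀ z ∈ ball (0 : ℂ) 1, deriv f z ≠ 0) ∧
    (∀ z ∈ ball (0 : ℂ) 1, (1 + z * deriv (deriv f) z / deriv f z).re > -(1/2))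

/-- The `n`-th section (partial sum) `s_n(f)(z) = z + ∑_{k=2}^n a_k z^k`, where
`a_k = f^{(k)}(0)/k!`. -/
noncomputable def sectionF (f : ℂ → ℂ) (n : ℕ) (z : ℂ) : ℂ :=
  ∑ k ∈ Finset.Icc 1 n, (iteratedDeriv k f 0 / (Nat.factorial k)) * z ^ k

/-!
If `f` is in the class `𝓕`, then `deriv f = p ^ 3` with `p 0 = 1` and `-1/2 < re (z * p' / p)`.
Jack's lemma applied to `1 - 1 / p` gives `1 / 2 < re p`, and by the Schwarz lemma
`p = 1 + z * φ * p` with `‖φ‖ ≤ 1`.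

The derivative of the `n`-th section of `f` is the Taylor polynomial of `p ^ 3` of degree `n - 1`.
By the Noshiro–Warschawski theorem it suffices that its real part is positive on `‖z‖ < 1 / 3`.
Carathéodory's inequality bounds the coefficients of `p` by `1`, so those of `p ^ 3` are dominated
by those of `1 / (1 - z) ^ 3`. For `4 ≤ n` and `‖z‖ ≤ 1 / 3` the tail of `p ^ 3` is therefore at
most `73 / 216`, whereas `‖p - 1‖ ≤ ‖p‖ / 3` forces the larger lower bound `27 / 64 ≤ re (p ^ 3)`.
For `n = 2` the bound on the first coefficient is enough, and for `n = 3` the first two coefficients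
are expressed through those of `φ`, where `‖φ' 0‖ ≤ 2 * (1 - ‖φ 0‖)`.
-/

open scoped ComplexOrder ComplexConjugate

theorem hasFDerivWithinAt_re {f : ℂ → ℂ} {f' z : ℂ} {s : Set ℂ} (hf : HasDerivWithinAt f f' s z) :
    HasFDerivWithinAt (fun z ↦ (f z).re) (reCLM ∘L (f' • (1 : ℂ →L[ℝ] ℂ))) s z :=
  reCLM.hasFDerivAt.comp_hasFDerivWithinAt z hf.complexToReal_fderiv

theorem injOn_of_re_deriv_pos {s : Set ℂ} {F F' : ℂ → ℂ} (hs : Convex ℝ s)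
    (hF : ∀ z ∈ s, HasDerivWithinAt F (F' z) s z) (hre : ∀ z ∈ s, 0 < (F' z).re) :
    Set.InjOn F s := by
  intro z hz w hw hzw
  by_contra hne
  have hd : w - z ≠ 0 := sub_ne_zero.mpr (Ne.symm hne)
  obtain ⟨u, hu, hslope⟩ := domain_mvt
    (fun u hu ↦ hasFDerivWithinAt_re ((hF u hu).div_const (w - z))) hs hz hw
  have hzero : (F' u).re = 0 := by simpa [hzw, div_mul_cancel₀ _ hd] using hslope.symm
  exact (hre u (hs.segment_subset hz hw hu)).ne' hzero

/-! ### Jack's lemma and the half-plane `1 / 2 < re w` -/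

theorem re_mul_sub_nonpos_of_isMaxOn_re {f : ℂ → ℂ} {f' z₀ z : ℂ} {s : Set ℂ} (hs : Convex ℝ s)
    (hf : HasDerivWithinAt f f' s z₀) (hmax : IsMaxOn (fun z ↦ (f z).re) s z₀)
    (hz₀ : z₀ ∈ s) (hz : z ∈ s) : (f' * (z - z₀)).re ≤ 0 := by
  simpa using hmax.localize.hasFDerivWithinAt_nonpos (hasFDerivWithinAt_re hf)
    (sub_mem_posTangentConeAt_of_segment_subset (hs.segment_subset hz₀ hz))

theorem mul_nonneg_of_forall_re_mul_sub_nonpos {a z₀ : ℂ}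
    (h : ∀ z ∈ closedBall (0 : ℂ) ‖z₀‖, (a * (z - z₀)).re ≤ 0) : 0 ≤ a * z₀ := by
  rcases eq_or_ne a 0 with rfl | ha
  · simp
  have ha' : (‖a‖ : ℂ) ≠ 0 := by simpa
  have hval : a * (‖z₀‖ * conj a / ‖a‖) = (‖a * z₀‖ : ℝ) := by
    rw [mul_div_assoc', mul_left_comm, mul_conj']
    push_cast [norm_mul]
    field_simp
  have hle := h (‖z₀‖ * conj a / ‖a‖) (by simp [ha])
  rw [mul_sub, hval, sub_re, ofReal_re, sub_nonpos] at hle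
  exact re_eq_norm.mp ((re_le_norm _).antisymm hle)

theorem mul_logDeriv_nonneg_of_isMaxOn_norm {f : ℂ → ℂ} {z₀ : ℂ} (hf : DifferentiableAt ℂ f z₀)
    (hmax : IsMaxOn (‖f ·‖) (closedBall 0 ‖z₀‖) z₀) : 0 ≤ z₀ * logDeriv f z₀ := by
  have hmax_re : IsMaxOn (fun z ↦ (conj (f z₀) * f z).re) (closedBall 0 ‖z₀‖) z₀ := by
    intro z hz
    calc (conj (f z₀) * f z).re ≤ ‖conj (f z₀) * f z‖ := re_le_norm _
      _ = ‖f z₀‖ * ‖f z‖ := by rw [norm_mul, norm_conj]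
      _ ≤ ‖f z₀‖ * ‖f z₀‖ := by gcongr; exact hmax hz
      _ = (conj (f z₀) * f z₀).re := by rw [conj_mul', ← ofReal_pow, ofReal_re, sq]
  have hnonneg : 0 ≤ conj (f z₀) * deriv f z₀ * z₀ :=
    mul_nonneg_of_forall_re_mul_sub_nonpos fun z hz ↦
      re_mul_sub_nonpos_of_isMaxOn_re (convex_closedBall _ _)
        (hf.hasDerivAt.const_mul _).hasDerivWithinAt hmax_re (by simp) hz
  rcases eq_or_ne (f z₀) 0 with h0 | h0
  · simp [logDeriv_apply, h0]
  have heq : z₀ * logDeriv f z₀ = conj (f z₀) * deriv f z₀ * z₀ / normSq (f z₀) := by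
    have : conj (f z₀) ≠ 0 := by simpa
    rw [logDeriv_apply, normSq_eq_conj_mul_self]
    field_simp
  rw [heq]
  exact div_nonneg hnonneg (by simpa using normSq_nonneg _)

theorem one_le_mul_logDeriv_of_isMaxOn_norm {ω : ℂ → ℂ} {R : ℝ} {z₀ : ℂ}
    (hω : DifferentiableOn ℂ ω (ball 0 R)) (hω0 : ω 0 = 0) (hz₀ : z₀ ∈ ball 0 R)
    (hne : ω z₀ ≠ 0) (hmax : IsMaxOn (‖ω ·‖) (closedBall 0 ‖z₀‖) z₀) :
    1 ≤ z₀ * logDeriv ω z₀ := by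
  have hz₀' : z₀ ≠ 0 := by rintro rfl; exact hne hω0
  have hdiff : DifferentiableAt ℂ ω z₀ := hω.differentiableAt (isOpen_ball.mem_nhds hz₀)
  -- By the Schwarz lemma the maximum at `z₀` survives division by `z`; the logarithmic derivative
  -- of `ω z / z` is the one of `ω` minus `1 / z`.
  have hquot_max : IsMaxOn (fun z ↦ ‖ω z / id z‖) (closedBall 0 ‖z₀‖) z₀ := by
    intro z hz
    have hmaps : Set.MapsTo ω (ball 0 ‖z₀‖) (closedBall (ω 0) ‖ω z₀‖) := fun u hu ↦ by
      simpa [hω0] using hmax (ball_subset_closedBall hu)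
    rcases eq_or_ne z 0 with rfl | hz0
    · simp only [hω0, zero_div, norm_zero, Set.mem_ofPred_eq]
      positivity
    have hschwarz : ‖ω z‖ ≤ ‖ω z₀‖ / ‖z₀‖ * ‖z‖ := by
      rcases (mem_closedBall_zero_iff.mp hz).lt_or_eq with hlt | heq
      · simpa [hω0] using dist_le_div_mul_dist_of_mapsTo_ball
          (hω.mono (ball_subset_ball (mem_ball_zero_iff.mp hz₀).le)) hmaps
          (mem_ball_zero_iff.mpr hlt)
      · rw [heq, div_mul_cancel₀ _ (norm_ne_zero_iff.mpr hz₀')]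
        exact hmax hz
    simpa [norm_div, div_le_iff₀ (norm_pos_iff.mpr hz0)] using hschwarz
  have hnonneg :=
    mul_logDeriv_nonneg_of_isMaxOn_norm (hdiff.div differentiableAt_id hz₀') hquot_max
  have hlog : logDeriv (ω / id) z₀ = logDeriv ω z₀ - 1 / z₀ :=
    (logDeriv_div z₀ hne hz₀' hdiff differentiableAt_id).trans (by rw [logDeriv_id])
  rw [hlog, mul_sub, mul_one_div_cancel hz₀'] at hnonneg
  exact sub_nonneg.mp hnonneg

theorem norm_one_sub_inv_lt_one_iff {w : ℂ} : ‖1 - w⁻¹‖ < 1 ↔ 1 / 2 < w.re := by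
  rcases eq_or_ne w 0 with rfl | hw
  · norm_num
  have hdiv : 1 - w⁻¹ = (w - 1) / w := by field_simp
  have hsq : ‖w - 1‖ ^ 2 = ‖w‖ ^ 2 - (2 * w.re - 1) := by
    rw [← normSq_eq_norm_sq, ← normSq_eq_norm_sq, normSq_sub, map_one, map_one, mul_one]
    ring
  rw [hdiv, norm_div, div_lt_one (norm_pos_iff.mpr hw),
    ← sq_lt_sq₀ (norm_nonneg _) (norm_nonneg _), hsq]
  constructor <;> intro h <;> linarith

theorem logDeriv_one_sub_inv {p : ℂ → ℂ} {z : ℂ} (hp : DifferentiableAt ℂ p z) (h0 : p z ≠ 0) :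
    logDeriv (fun z ↦ 1 - (p z)⁻¹) z = logDeriv p z / (p z - 1) := by
  have hderiv : deriv (fun z ↦ 1 - (p z)⁻¹) z = deriv p z / p z ^ 2 := by
    simpa [neg_div] using ((hp.hasDerivAt.inv h0).const_sub 1).deriv
  have hsub : 1 - (p z)⁻¹ = (p z - 1) / p z := by field_simp
  rw [logDeriv_apply, logDeriv_apply, hderiv, hsub]
  field_simp

theorem half_lt_re_of_neg_half_lt_re_mul_logDeriv {p : ℂ → ℂ} {R : ℝ}
    (hp : DifferentiableOn ℂ p (ball 0 R)) (hp0 : p 0 = 1) (hne : ∀ z ∈ ball 0 R, p z ≠ 0)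
    (hre : ∀ z ∈ ball 0 R, -(1 / 2) < (z * logDeriv p z).re) {z : ℂ} (hz : z ∈ ball 0 R) :
    1 / 2 < (p z).re := by
  set ω : ℂ → ℂ := fun z ↦ 1 - (p z)⁻¹
  have hω : DifferentiableOn ℂ ω (ball 0 R) := (hp.inv hne).const_sub 1
  have hsub : closedBall (0 : ℂ) ‖z‖ ⊆ ball 0 R := closedBall_subset_ball (mem_ball_zero_iff.mp hz)
  obtain ⟨z₁, hz₁, hmax⟩ := (isCompact_closedBall (0 : ℂ) ‖z‖).exists_isMaxOn
    ⟨z, by simp⟩ (hω.continuousOn.norm.mono hsub)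
  by_contra! hlt
  rw [← not_lt, ← norm_one_sub_inv_lt_one_iff, not_lt] at hlt
  have hω₁ : 1 ≤ ‖ω z₁‖ := hlt.trans (hmax (by simp))
  have hp₁ : p z₁ ≠ 0 := hne z₁ (hsub hz₁)
  have hdp : DifferentiableAt ℂ p z₁ := hp.differentiableAt (isOpen_ball.mem_nhds (hsub hz₁))
  have hjack := one_le_mul_logDeriv_of_isMaxOn_norm hω (by simp [ω, hp0]) (hsub hz₁)
    (norm_pos_iff.mp (one_pos.trans_le hω₁))
    (hmax.on_subset (closedBall_subset_closedBall (mem_closedBall_zero_iff.mp hz₁)))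
  rw [logDeriv_one_sub_inv hdp hp₁] at hjack
  have hp₁_ne : p z₁ - 1 ≠ 0 := fun h ↦ by
    norm_num [ω, sub_eq_zero.mp h] at hω₁
  have hp₁_re : (p z₁).re ≤ 1 / 2 := by
    rwa [← not_lt, ← norm_one_sub_inv_lt_one_iff, not_lt]
  set k := z₁ * (logDeriv p z₁ / (p z₁ - 1)) with hk
  obtain ⟨hk_re, hk_im⟩ := le_def.mp hjack
  have hlog : z₁ * logDeriv p z₁ = k * (p z₁ - 1) := by rw [hk]; field_simp
  have hlower := hre z₁ (hsub hz₁)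
  rw [hlog, mul_re, ← hk_im, one_im, zero_mul, sub_zero, sub_re, one_re] at hlower
  rw [one_re] at hk_re
  nlinarith

theorem exists_pow_eqOn_ball {f : ℂ → ℂ} {c w : ℂ} {R : ℝ} {m : ℕ}
    (hf : DifferentiableOn ℂ f (ball c R)) (hne : ∀ z ∈ ball c R, f z ≠ 0) (hm : m ≠ 0)
    (hw : w ^ m = f c) :
    ∃ p : ℂ → ℂ, DifferentiableOn ℂ p (ball c R) ∧ p c = w ∧ Set.EqOn (p ^ m) f (ball c R) := by
  rcases le_or_gt R 0 with hR | hR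
  · exact ⟨fun _ ↦ w, by simp [ball_eq_empty.mpr hR]⟩
  have hc : c ∈ ball c R := mem_ball_self hR
  have hw0 : w ≠ 0 := fun h ↦ hne c hc (by rw [← hw, h, zero_pow hm])
  have hm' : (m : ℂ) ≠ 0 := Nat.cast_ne_zero.mpr hm
  obtain ⟨L, hLc, hL⟩ := (((hf.deriv isOpen_ball).div hf hne).div_const (m : ℂ)).isExactOn_ball
    |>.with_val_at c (log w)
  set p : ℂ → ℂ := fun z ↦ exp (L z)
  have hp : ∀ z ∈ ball c R, HasDerivAt p (exp (L z) * (logDeriv f z / m)) z :=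
    fun z hz ↦ (hL z hz).cexp
  have hp_diff : DifferentiableOn ℂ p (ball c R) := fun z hz ↦
    (hp z hz).differentiableAt.differentiableWithinAt
  have hpc : p c = w := by simp [p, hLc, exp_log hw0]
  have hlog : Set.EqOn (logDeriv (p ^ m)) (logDeriv f) (ball c R) := fun z hz ↦ by
    have hpow : logDeriv (p ^ m) z = m * logDeriv p z :=
      logDeriv_fun_pow (hp z hz).differentiableAt m
    rw [hpow, logDeriv_apply p, (hp z hz).deriv, mul_div_cancel_left₀ _ (exp_ne_zero _),
      mul_div_cancel₀ _ hm']
  obtain ⟨a, -, ha⟩ := (logDeriv_eqOn_iff (hp_diff.pow m) hf isOpen_ball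
    (convex_ball c R).isPreconnected hne fun z _ ↦ pow_ne_zero m (exp_ne_zero _)).mp hlog
  have ha1 : a = 1 := by simpa [hpc, hw, hne c hc] using ha hc
  exact ⟨p, hp_diff, hpc, by simpa [ha1] using ha⟩

theorem IsInClassF.exists_cube_root {f : ℂ → ℂ} (hf : IsInClassF f) :
    ∃ p : ℂ → ℂ, DifferentiableOn ℂ p (ball 0 1) ∧ p 0 = 1 ∧
      (∀ z ∈ ball (0 : ℂ) 1, 1 / 2 < (p z).re) ∧ Set.EqOn (p ^ 3) (deriv f) (ball 0 1) := by
  obtain ⟨hfa, -, hf0, hne, hre⟩ := hf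
  obtain ⟨p, hp, hp0, hpf⟩ := exists_pow_eqOn_ball hfa.deriv.differentiableOn hne three_ne_zero
    (w := 1) (by rw [hf0, one_pow])
  refine ⟨p, hp, hp0, fun z hz ↦ half_lt_re_of_neg_half_lt_re_mul_logDeriv hp hp0 ?_ ?_ hz, hpf⟩
  · exact fun z hz h ↦ hne z hz (by simp [← hpf hz, h])
  · intro z hz
    have hz_nhds := isOpen_ball.mem_nhds hz
    have hlog : deriv (deriv f) z / deriv f z = 3 * logDeriv p z := by
      rw [← logDeriv_apply, ← (logDeriv_congr_nhds (hpf.eventuallyEq_of_mem hz_nhds)).eq_of_nhds]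
      exact logDeriv_fun_pow (hp.differentiableAt hz_nhds) 3
    have h := hre z hz
    rw [mul_div_assoc, hlog, mul_left_comm, add_re, one_re, ← ofReal_ofNat, re_ofReal_mul] at h
    linarith

/-! ### Taylor coefficients -/

/-- The `n`-th coefficient of the Taylor series of `f` at `c`. -/
noncomputable def taylorCoeff (f : ℂ → ℂ) (c : ℂ) (n : ℕ) : ℂ :=
  iteratedDeriv n f c / n.factorial

@[simp]
theorem taylorCoeff_zero (f : ℂ → ℂ) (c : ℂ) : taylorCoeff f c 0 = f c := by
  simp [taylorCoeff]

theorem taylorCoeff_congr {f g : ℂ → ℂ} {c : ℂ} (h : f =ᶠ[nhds c] g) (n : ℕ) :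
    taylorCoeff f c n = taylorCoeff g c n := by
  rw [taylorCoeff, taylorCoeff, h.iteratedDeriv_eq]

theorem taylorCoeff_const_mul (a : ℂ) (f : ℂ → ℂ) (c : ℂ) (n : ℕ) :
    taylorCoeff (fun z ↦ a * f z) c n = a * taylorCoeff f c n := by
  rw [taylorCoeff, taylorCoeff, iteratedDeriv_const_mul_field, mul_div_assoc]

theorem taylorCoeff_const_add {f : ℂ → ℂ} {c : ℂ} {n : ℕ} (hn : n ≠ 0) (a : ℂ) :
    taylorCoeff (fun z ↦ a + f z) c n = taylorCoeff f c n := by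
  rw [taylorCoeff, taylorCoeff, iteratedDeriv_const_add (Nat.pos_of_ne_zero hn)]

theorem taylorCoeff_mul {f g : ℂ → ℂ} {c : ℂ} (hf : AnalyticAt ℂ f c) (hg : AnalyticAt ℂ g c)
    (n : ℕ) : taylorCoeff (f * g) c n =
      ∑ ij ∈ Finset.HasAntidiagonal.antidiagonal n,
        taylorCoeff f c ij.1 * taylorCoeff g c ij.2 := by
  rw [Finset.Nat.sum_antidiagonal_eq_sum_range_succ
    (fun i j ↦ taylorCoeff f c i * taylorCoeff g c j), taylorCoeff,
    iteratedDeriv_mul hf.contDiffAt hg.contDiffAt, Finset.sum_div]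
  refine Finset.sum_congr rfl fun i hi ↦ ?_
  have hfac : (n.choose i : ℂ) * i.factorial * (n - i).factorial = n.factorial := mod_cast
    Nat.choose_mul_factorial_mul_factorial (Nat.lt_succ_iff.mp (Finset.mem_range.mp hi))
  have hne : ∀ k : ℕ, (k.factorial : ℂ) ≠ 0 := fun k ↦ mod_cast k.factorial_ne_zero
  rw [taylorCoeff, taylorCoeff, div_mul_div_comm,
    div_eq_div_iff (hne n) (mul_ne_zero (hne _) (hne _)), ← hfac]
  ring

theorem taylorCoeff_sub_mul {f : ℂ → ℂ} {c : ℂ} (hf : AnalyticAt ℂ f c) (n : ℕ) :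
    taylorCoeff (fun z ↦ (z - c) * f z) c (n + 1) = taylorCoeff f c n := by
  have hsub : ∀ k, taylorCoeff (fun z ↦ z - c) c k = if k = 1 then 1 else 0 := fun k ↦ by
    rcases eq_or_ne k 0 with rfl | hk
    · simp
    · simp only [sub_eq_neg_add]
      rw [taylorCoeff_const_add hk, taylorCoeff, iteratedDeriv_fun_id, if_neg hk]
      split_ifs with hk1 <;> simp [hk1]
  refine (taylorCoeff_mul (analyticAt_id.sub analyticAt_const) hf (n + 1)).trans ?_
  rw [Finset.sum_eq_single (1, n)]
  · exact (congrArg (· * _) (hsub 1)).trans (one_mul _)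
  · rintro ⟨i, j⟩ hij hne
    have hi : i ≠ 1 := by
      rintro rfl
      exact hne (Prod.ext rfl (by simpa [add_comm] using hij))
    exact mul_eq_zero_of_left ((hsub i).trans (if_neg hi)) _
  · simp [add_comm]

theorem taylorCoeff_mul_one {f g : ℂ → ℂ} {c : ℂ} (hf : AnalyticAt ℂ f c)
    (hg : AnalyticAt ℂ g c) :
    taylorCoeff (f * g) c 1 = f c * taylorCoeff g c 1 + taylorCoeff f c 1 * g c := by
  rw [taylorCoeff_mul hf hg, Finset.Nat.sum_antidiagonal_eq_sum_range_succ
    (fun i j ↦ taylorCoeff f c i * taylorCoeff g c j)]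
  simp [Finset.sum_range_succ]

theorem taylorCoeff_mul_two {f g : ℂ → ℂ} {c : ℂ} (hf : AnalyticAt ℂ f c)
    (hg : AnalyticAt ℂ g c) :
    taylorCoeff (f * g) c 2 =
      f c * taylorCoeff g c 2 + taylorCoeff f c 1 * taylorCoeff g c 1 +
        taylorCoeff f c 2 * g c := by
  rw [taylorCoeff_mul hf hg, Finset.Nat.sum_antidiagonal_eq_sum_range_succ
    (fun i j ↦ taylorCoeff f c i * taylorCoeff g c j)]
  simp [Finset.sum_range_succ]

theorem taylorCoeff_pow_three_one {f : ℂ → ℂ} {c : ℂ} (hf : AnalyticAt ℂ f c) (hfc : f c = 1) :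
    taylorCoeff (f ^ 3) c 1 = 3 * taylorCoeff f c 1 := by
  rw [pow_succ, pow_two, taylorCoeff_mul_one (hf.mul hf) hf, taylorCoeff_mul_one hf hf,
    Pi.mul_apply, hfc]
  ring

theorem taylorCoeff_pow_three_two {f : ℂ → ℂ} {c : ℂ} (hf : AnalyticAt ℂ f c) (hfc : f c = 1) :
    taylorCoeff (f ^ 3) c 2 = 3 * taylorCoeff f c 2 + 3 * taylorCoeff f c 1 ^ 2 := by
  rw [pow_succ, pow_two, taylorCoeff_mul_two (hf.mul hf) hf, taylorCoeff_mul_one hf hf,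
    taylorCoeff_mul_two hf hf, Pi.mul_apply, hfc]
  ring

theorem hasSum_taylorCoeff {f : ℂ → ℂ} {c z : ℂ} {R : ℝ} (hf : DifferentiableOn ℂ f (ball c R))
    (hz : z ∈ ball c R) : HasSum (fun n ↦ taylorCoeff f c n * (z - c) ^ n) (f z) := by
  refine (hasSum_taylorSeries_on_ball hf hz).congr_fun ?_
  intro n
  rw [taylorCoeff, smul_eq_mul, smul_eq_mul]
  ring

theorem norm_taylorCoeff_pow_le {f : ℂ → ℂ} {c : ℂ} (hf : AnalyticAt ℂ f c)
    (hle : ∀ n, ‖taylorCoeff f c n‖ ≤ 1) (m n : ℕ) :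
    ‖taylorCoeff (f ^ (m + 1)) c n‖ ≤ (m + n).choose m := by
  induction m generalizing n with
  | zero => simpa using hle n
  | succ m ih =>
    rw [pow_succ', taylorCoeff_mul hf (hf.pow _), add_right_comm m 1 n,
      ← Finset.sum_antidiagonal_choose_add, Nat.cast_sum]
    refine norm_sum_le_of_le _ fun ij _ ↦ ?_
    rw [norm_mul]
    exact mul_le_of_le_one_left (norm_nonneg _) (hle _) |>.trans (ih _)

theorem norm_sub_sum_taylorCoeff_le {f : ℂ → ℂ} {c : ℂ} (hf : DifferentiableOn ℂ f (ball c 1))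
    {m : ℕ} (hle : ∀ k, ‖taylorCoeff f c k‖ ≤ (m + k).choose m) {r : ℝ} (hr : r < 1) {z : ℂ}
    (hz : ‖z - c‖ ≤ r) (n : ℕ) :
    ‖f z - ∑ k ∈ Finset.range n, taylorCoeff f c k * (z - c) ^ k‖ ≤
      1 / (1 - r) ^ (m + 1) - ∑ k ∈ Finset.range n, (m + k).choose m * r ^ k := by
  have hr0 : 0 ≤ r := (norm_nonneg _).trans hz
  have hsum := hasSum_taylorCoeff hf (mem_ball_iff_norm.mpr (hz.trans_lt hr))
  have hmajorant : HasSum (fun k ↦ (m + k).choose m * r ^ k) (1 / (1 - r) ^ (m + 1)) := by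
    simpa only [add_comm m] using
      hasSum_choose_mul_geometric_of_norm_lt_one m (by rwa [Real.norm_of_nonneg hr0])
  refine ((hasSum_nat_add_iff' n).mpr hsum).norm_le_of_bounded
    ((hasSum_nat_add_iff' n).mpr hmajorant) fun k ↦ ?_
  rw [norm_mul, norm_pow]
  gcongr
  exact hle _

/-! ### Carathéodory's coefficient inequality -/

theorem norm_circleAverage_le (f : ℂ → ℂ) (c : ℂ) (r : ℝ) :
    ‖Real.circleAverage f c r‖ ≤ Real.circleAverage (fun z ↦ ‖f z‖) c r := by
  rw [Real.circleAverage_def, Real.circleAverage_def, norm_smul, smul_eq_mul,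
    Real.norm_of_nonneg (by positivity)]
  gcongr
  exact intervalIntegral.norm_integral_le_integral_norm (by positivity)

theorem taylorCoeff_eq_circleAverage {f : ℂ → ℂ} {c : ℂ} {r : ℝ} (hr : 0 < r)
    (hf : DiffContOnCl ℂ f (ball c r)) (n : ℕ) :
    taylorCoeff f c n = Real.circleAverage (fun z ↦ f z / (z - c) ^ n) c r := by
  have hcauchy := hf.circleIntegral_one_div_sub_center_pow_smul hr n
  have hintegrand : ∀ z, (z - c)⁻¹ • (f z / (z - c) ^ n) = (1 / (z - c) ^ (n + 1)) • f z :=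
    fun z ↦ by simp only [smul_eq_mul, pow_succ]; field_simp
  rw [Real.circleAverage_eq_circleIntegral hr.ne', funext hintegrand, hcauchy, taylorCoeff,
    smul_eq_mul, smul_eq_mul, div_mul_eq_mul_div, mul_div_assoc,
    inv_mul_cancel_left₀ two_pi_I_ne_zero]

theorem circleAverage_conj_div_pow {f : ℂ → ℂ} {c : ℂ} {r : ℝ} (hr : 0 < r)
    (hf : DiffContOnCl ℂ f (ball c r)) {n : ℕ} (hn : n ≠ 0) :
    Real.circleAverage (fun z ↦ conj (f z) / (z - c) ^ n) c r = 0 := by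
  -- On the circle `conj (z - c) = r ^ 2 / (z - c)`, so the integrand is antiholomorphic there.
  set g : ℂ → ℂ := fun z ↦ (z - c) ^ n • f z
  have hg_diff : DiffContOnCl ℂ g (ball c r) :=
    (by fun_prop : Differentiable ℂ fun z ↦ (z - c) ^ n).diffContOnCl.smul hf
  have hg_avg : Real.circleAverage (fun z ↦ conj (g z)) c r = 0 := by
    have hg_int : CircleIntegrable g c r :=
      (hg_diff.continuousOn_ball.mono sphere_subset_closedBall).circleIntegrable hr.le
    calc _ = conj (Real.circleAverage g c r) :=
          (conjCLE : ℂ →L[ℝ] ℂ).circleAverage_comp_comm hg_int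
      _ = conj (g c) := by rw [DiffContOnCl.circleAverage (by rwa [abs_of_pos hr])]
      _ = 0 := by simp [g, hn]
  have heq : Set.EqOn (fun z ↦ conj (f z) / (z - c) ^ n)
      (fun z ↦ ((r : ℂ) ^ (2 * n))⁻¹ • conj (g z)) (sphere c |r|) := by
    intro z hz
    rw [abs_of_pos hr] at hz
    have hz_ne : z - c ≠ 0 := sub_ne_zero.mpr (ne_of_mem_sphere hz hr.ne')
    have hz_conj_ne : conj (z - c) ≠ 0 := (map_ne_zero _).mpr hz_ne
    have hz_norm : (r : ℂ) ^ 2 = conj (z - c) * (z - c) := by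
      rw [conj_mul', mem_sphere_iff_norm.mp hz]
    simp only [g, smul_eq_mul, map_mul, map_pow, pow_mul, hz_norm, mul_pow]
    field_simp
  rw [Real.circleAverage_congr_sphere heq, Real.circleAverage_fun_smul, hg_avg, smul_zero]

theorem circleAverage_re_div_pow {f : ℂ → ℂ} {c : ℂ} {r : ℝ} (hr : 0 < r)
    (hf : DiffContOnCl ℂ f (ball c r)) {n : ℕ} (hn : n ≠ 0) :
    Real.circleAverage (fun z ↦ ((f z).re : ℂ) / (z - c) ^ n) c r = taylorCoeff f c n / 2 := by
  have hcont : ContinuousOn f (sphere c r) := hf.continuousOn_ball.mono sphere_subset_closedBall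
  have hpow_ne : ∀ z ∈ sphere c r, (z - c) ^ n ≠ 0 := fun z hz ↦
    pow_ne_zero n (sub_ne_zero.mpr (ne_of_mem_sphere hz hr.ne'))
  have hint : CircleIntegrable (fun z ↦ f z / (z - c) ^ n) c r :=
    (hcont.div (by fun_prop) hpow_ne).circleIntegrable hr.le
  have hint_conj : CircleIntegrable (fun z ↦ conj (f z) / (z - c) ^ n) c r :=
    ((continuous_conj.comp_continuousOn hcont).div (by fun_prop) hpow_ne).circleIntegrable hr.le
  have hsplit : (fun z ↦ ((f z).re : ℂ) / (z - c) ^ n) =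
      fun z ↦ (2⁻¹ : ℂ) • (f z / (z - c) ^ n + conj (f z) / (z - c) ^ n) := by
    ext z
    rw [re_eq_add_conj, smul_eq_mul]
    ring
  rw [hsplit, Real.circleAverage_fun_smul, Real.circleAverage_fun_add hint hint_conj,
    circleAverage_conj_div_pow hr hf hn, add_zero, ← taylorCoeff_eq_circleAverage hr hf,
    smul_eq_mul, inv_mul_eq_div]

theorem norm_taylorCoeff_mul_pow_le_of_re_nonneg {f : ℂ → ℂ} {c : ℂ} {r : ℝ} (hr : 0 < r)
    (hf : DiffContOnCl ℂ f (ball c r)) (hre : ∀ z ∈ sphere c r, 0 ≤ (f z).re)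
    {n : ℕ} (hn : n ≠ 0) : ‖taylorCoeff f c n‖ * r ^ n ≤ 2 * (f c).re := by
  have hcont : ContinuousOn f (sphere c r) := hf.continuousOn_ball.mono sphere_subset_closedBall
  have hnorm : Set.EqOn (fun z ↦ ‖((f z).re : ℂ) / (z - c) ^ n‖)
      (fun z ↦ (r ^ n)⁻¹ • (f z).re) (sphere c |r|) := by
    intro z hz
    rw [abs_of_pos hr] at hz
    simp [mem_sphere_iff_norm.mp hz, abs_of_nonneg (hre z hz), div_eq_inv_mul]
  have havg : Real.circleAverage (fun z ↦ (f z).re) c r = (f c).re := by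
    have h := reCLM.circleAverage_comp_comm (hcont.circleIntegrable hr.le)
    rwa [DiffContOnCl.circleAverage (by rwa [abs_of_pos hr])] at h
  have hle : ‖taylorCoeff f c n / 2‖ ≤ (r ^ n)⁻¹ * (f c).re := by
    rw [← circleAverage_re_div_pow hr hf hn]
    refine (norm_circleAverage_le _ _ _).trans_eq ?_
    rw [Real.circleAverage_congr_sphere hnorm, Real.circleAverage_fun_smul, havg, smul_eq_mul]
  rw [norm_div, norm_ofNat, inv_mul_eq_div, div_le_div_iff₀ two_pos (pow_pos hr n)] at hle
  linarith

theorem norm_taylorCoeff_mul_pow_le_of_le_re {f : ℂ → ℂ} {c : ℂ} {R a : ℝ}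
    (hf : DifferentiableOn ℂ f (ball c R)) (hre : ∀ z ∈ ball c R, a ≤ (f z).re) (hR : 0 < R)
    {n : ℕ} (hn : n ≠ 0) : ‖taylorCoeff f c n‖ * R ^ n ≤ 2 * ((f c).re - a) := by
  have hbound : ∀ r ∈ Set.Ioo 0 R, ‖taylorCoeff f c n‖ * r ^ n ≤ 2 * ((f c).re - a) := by
    rintro r ⟨hr0, hrR⟩
    have hsub : closedBall c r ⊆ ball c R := closedBall_subset_ball hrR
    have hdiff : DiffContOnCl ℂ (fun z ↦ (-a : ℂ) + f z) (ball c r) :=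
      ((hf.mono hsub).const_add _).diffContOnCl_ball subset_rfl
    have h := norm_taylorCoeff_mul_pow_le_of_re_nonneg hr0 hdiff
      (fun z hz ↦ by simpa using hre z (hsub (sphere_subset_closedBall hz))) hn
    rw [taylorCoeff_const_add hn] at h
    simpa [neg_add_eq_sub] using h
  have hlim : Filter.Tendsto (fun r : ℝ ↦ ‖taylorCoeff f c n‖ * r ^ n) (nhdsWithin R (Set.Iio R))
      (nhds (‖taylorCoeff f c n‖ * R ^ n)) :=
    tendsto_nhdsWithin_of_tendsto_nhds (Continuous.tendsto (by fun_prop) R)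
  exact le_of_tendsto hlim (Filter.mem_of_superset (Ioo_mem_nhdsLT hR) hbound)

theorem norm_taylorCoeff_le_one_of_half_le_re {p : ℂ → ℂ} {c : ℂ}
    (hp : DifferentiableOn ℂ p (ball c 1)) (hpc : p c = 1)
    (hre : ∀ z ∈ ball c 1, 1 / 2 ≤ (p z).re) (n : ℕ) : ‖taylorCoeff p c n‖ ≤ 1 := by
  rcases eq_or_ne n 0 with rfl | hn
  · simp [hpc]
  · have h := norm_taylorCoeff_mul_pow_le_of_le_re hp hre one_pos hn
    rw [hpc, one_re, one_pow, mul_one] at h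
    linarith

theorem norm_taylorCoeff_mul_pow_le_of_norm_le_one {φ : ℂ → ℂ} {c : ℂ} {R : ℝ}
    (hφ : DifferentiableOn ℂ φ (ball c R)) (hle : ∀ z ∈ ball c R, ‖φ z‖ ≤ 1) (hR : 0 < R) {n : ℕ}
    (hn : n ≠ 0) : ‖taylorCoeff φ c n‖ * R ^ n ≤ 2 * (1 - ‖φ c‖) := by
  obtain ⟨u, hu, huφ⟩ := exists_norm_eq_mul_self (φ c)
  have hre : ∀ z ∈ ball c R, -1 ≤ (-u * φ z).re := fun z hz ↦ by
    have h := re_le_norm (u * φ z)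
    rw [norm_mul, hu, one_mul] at h
    rw [neg_mul, neg_re, neg_le_neg_iff]
    exact h.trans (hle z hz)
  have h := norm_taylorCoeff_mul_pow_le_of_le_re (hφ.const_mul (-u)) hre hR hn
  rw [taylorCoeff_const_mul, norm_mul, norm_neg, hu, one_mul, neg_mul, ← huφ, neg_re, ofReal_re]
    at h
  linarith

theorem exists_eq_one_add_mul_of_half_lt_re {p : ℂ → ℂ} (hp : DifferentiableOn ℂ p (ball 0 1))
    (hp0 : p 0 = 1) (hre : ∀ z ∈ ball (0 : ℂ) 1, 1 / 2 < (p z).re) :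
    ∃ φ : ℂ → ℂ, DifferentiableOn ℂ φ (ball 0 1) ∧ (∀ z ∈ ball (0 : ℂ) 1, ‖φ z‖ ≤ 1) ∧
      ∀ z ∈ ball (0 : ℂ) 1, p z = 1 + z * φ z * p z := by
  have hne : ∀ z ∈ ball (0 : ℂ) 1, p z ≠ 0 := fun z hz h ↦ by
    have := hre z hz
    norm_num [h] at this
  set ω : ℂ → ℂ := fun z ↦ 1 - (p z)⁻¹
  have hω : DifferentiableOn ℂ ω (ball 0 1) := (hp.inv hne).const_sub 1
  have hω0 : ω 0 = 0 := by simp [ω, hp0]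
  have hmaps : Set.MapsTo ω (ball 0 1) (closedBall (ω 0) 1) := fun z hz ↦ by
    simpa [hω0] using (norm_one_sub_inv_lt_one_iff.mpr (hre z hz)).le
  refine ⟨dslope ω 0, (differentiableOn_dslope (ball_mem_nhds 0 one_pos)).mpr hω,
    fun z hz ↦ by simpa using norm_dslope_le_div_of_mapsTo_ball hω hmaps hz, fun z hz ↦ ?_⟩
  have hslope : z * dslope ω 0 z = 1 - (p z)⁻¹ := by
    simpa [hω0] using sub_smul_dslope ω 0 z
  rw [hslope]
  field_simp [hne z hz]
  ring

theorem le_re_pow_three_of_norm_sub_one_le {w : ℂ} (hw : ‖w - 1‖ ≤ ‖w‖ / 3) :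
    27 / 64 ≤ (w ^ 3).re := by
  have hsq : ‖w - 1‖ ^ 2 ≤ ‖w‖ ^ 2 / 9 := by
    calc ‖w - 1‖ ^ 2 ≤ (‖w‖ / 3) ^ 2 := by gcongr
      _ = _ := by ring
  -- The disk with diameter `[3 / 4, 3 / 2]`; its leftmost point is the extremal one.
  have hdisk : 8 * (w.re ^ 2 + w.im ^ 2) - 18 * w.re + 9 ≤ 0 := by
    rw [← normSq_eq_norm_sq, ← normSq_eq_norm_sq, normSq_apply, normSq_apply, sub_re, sub_im,
      one_re, one_im] at hsq
    linarith
  have hre : 3 / 4 ≤ w.re := by nlinarith [sq_nonneg w.im]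
  have hcube : (w ^ 3).re = w.re ^ 3 - 3 * w.re * w.im ^ 2 := by
    simp only [pow_succ, pow_zero, one_mul, mul_re, mul_im]
    ring
  have hfactor : 0 ≤ 4 * (w.re - 3 / 4) ^ 2 * (w.re - 3 / 16) := by
    have : 0 ≤ w.re - 3 / 16 := by linarith
    positivity
  rw [hcube]
  nlinarith

theorem re_quadratic_pos {a b z : ℂ} (ha : ‖a‖ ≤ 1) (hb : ‖b‖ ≤ 2 * (1 - ‖a‖))
    (hz : ‖z‖ < 1 / 3) : 0 < (1 + 3 * a * z + (6 * a ^ 2 + 3 * b) * z ^ 2).re := by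
  -- With `u = 3 * a * z` and `x = re u`, the real part of `1 + u + (2 / 3) * u ^ 2` is
  -- `(4 / 3) * (x + 3 / 8) ^ 2 + 13 / 16 - 6 * ‖a‖ ^ 2 * ‖z‖ ^ 2`.
  set u := 3 * a * z with hu
  have hsplit : 1 + u + (6 * a ^ 2 + 3 * b) * z ^ 2 =
      1 + u + ((2 / 3 : ℝ) : ℂ) * u ^ 2 + 3 * b * z ^ 2 := by
    rw [hu]
    push_cast
    ring
  have hu_norm : u.re ^ 2 + u.im ^ 2 = 9 * (‖a‖ ^ 2 * ‖z‖ ^ 2) := by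
    have h : ‖u‖ ^ 2 = 9 * (‖a‖ ^ 2 * ‖z‖ ^ 2) := by
      rw [hu, norm_mul, norm_mul, norm_ofNat]
      ring
    rw [← h, ← normSq_eq_norm_sq, normSq_apply]
    ring
  have hu_sq : (u ^ 2).re = u.re ^ 2 - u.im ^ 2 := by rw [sq, mul_re]; ring
  have hb_re : -(3 * ‖b‖ * ‖z‖ ^ 2) ≤ (3 * b * z ^ 2).re := by
    have h := abs_re_le_norm (3 * b * z ^ 2)
    rw [norm_mul, norm_mul, norm_pow, norm_ofNat] at h
    exact (abs_le.mp h).1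
  have hbz : 3 * ‖b‖ * ‖z‖ ^ 2 ≤ 6 * (1 - ‖a‖) * ‖z‖ ^ 2 := by
    have := mul_le_mul_of_nonneg_right hb (sq_nonneg ‖z‖)
    linarith
  have hz_sq : ‖z‖ ^ 2 < 1 / 9 := by nlinarith [norm_nonneg z]
  have hremainder : 6 * (‖a‖ ^ 2 + 1 - ‖a‖) * ‖z‖ ^ 2 ≤ 6 * ‖z‖ ^ 2 := by
    gcongr
    nlinarith [norm_nonneg a]
  rw [hsplit, add_re, add_re, add_re, one_re, re_ofReal_mul, hu_sq]
  nlinarith [sq_nonneg (u.re + 3 / 8)]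

/-! ### Sections of the cube -/

section CubeOfHalfPlaneFunction

variable {p : ℂ → ℂ} (hp : DifferentiableOn ℂ p (ball 0 1)) (hp0 : p 0 = 1)
  (hre : ∀ z ∈ ball (0 : ℂ) 1, 1 / 2 < (p z).re) {z : ℂ}

include hp hp0 hre

theorem norm_taylorCoeff_pow_three_le (n : ℕ) :
    ‖taylorCoeff (p ^ 3) 0 n‖ ≤ (2 + n).choose 2 :=
  norm_taylorCoeff_pow_le (hp.analyticAt (ball_mem_nhds 0 one_pos))
    (norm_taylorCoeff_le_one_of_half_le_re hp hp0 fun z hz ↦ (hre z hz).le) 2 n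

theorem re_sum_range_two_taylorCoeff_pow_three_pos (hz : ‖z‖ < 1 / 3) :
    0 < (∑ k ∈ Finset.range 2, taylorCoeff (p ^ 3) 0 k * z ^ k).re := by
  have hcoeff : ‖taylorCoeff (p ^ 3) 0 1‖ ≤ 3 := by
    simpa using norm_taylorCoeff_pow_three_le hp hp0 hre 1
  have hlinear : ‖taylorCoeff (p ^ 3) 0 1 * z‖ < 1 := by
    rw [norm_mul]
    nlinarith [norm_nonneg z]
  have hsum : ∑ k ∈ Finset.range 2, taylorCoeff (p ^ 3) 0 k * z ^ k =
      1 + taylorCoeff (p ^ 3) 0 1 * z := by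
    simp [Finset.sum_range_succ, hp0]
  have hre_linear := (abs_le.mp (abs_re_le_norm (taylorCoeff (p ^ 3) 0 1 * z))).1
  rw [hsum, add_re, one_re]
  linarith

theorem re_sum_range_three_taylorCoeff_pow_three_pos (hz : ‖z‖ < 1 / 3) :
    0 < (∑ k ∈ Finset.range 3, taylorCoeff (p ^ 3) 0 k * z ^ k).re := by
  obtain ⟨φ, hφ, hφ_le, hpφ⟩ := exists_eq_one_add_mul_of_half_lt_re hp hp0 hre
  have h0 : ball (0 : ℂ) 1 ∈ nhds 0 := ball_mem_nhds 0 one_pos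
  have hpa := hp.analyticAt h0
  have hφa := hφ.analyticAt h0
  have hcoeff_succ : ∀ n, taylorCoeff p 0 (n + 1) = taylorCoeff (φ * p) 0 n := fun n ↦ by
    have heq : p =ᶠ[nhds 0] fun z ↦ 1 + z * (φ * p) z := by
      filter_upwards [h0] with z hz
      simpa [mul_assoc] using hpφ z hz
    rw [taylorCoeff_congr heq, taylorCoeff_const_add n.succ_ne_zero]
    simpa using taylorCoeff_sub_mul (hφa.mul hpa) n
  have hcoeff_one : taylorCoeff p 0 1 = φ 0 := by simp [hcoeff_succ 0, hp0]
  have hcoeff_two : taylorCoeff p 0 2 = φ 0 ^ 2 + taylorCoeff φ 0 1 := by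
    rw [hcoeff_succ 1, taylorCoeff_mul_one hφa hpa, hcoeff_one, hp0, mul_one, sq]
  have hsum : ∑ k ∈ Finset.range 3, taylorCoeff (p ^ 3) 0 k * z ^ k =
      1 + 3 * φ 0 * z + (6 * φ 0 ^ 2 + 3 * taylorCoeff φ 0 1) * z ^ 2 := by
    simp only [Finset.sum_range_succ, Finset.sum_range_zero, taylorCoeff_zero, Pi.pow_apply, hp0,
      taylorCoeff_pow_three_one hpa hp0, taylorCoeff_pow_three_two hpa hp0, hcoeff_one, hcoeff_two]
    ring
  rw [hsum]
  refine re_quadratic_pos (hφ_le 0 (mem_ball_self one_pos)) ?_ hz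
  simpa using norm_taylorCoeff_mul_pow_le_of_norm_le_one hφ hφ_le one_pos one_ne_zero

theorem le_re_pow_three_of_norm_le (hz : ‖z‖ ≤ 1 / 3) : 27 / 64 ≤ (p z ^ 3).re := by
  obtain ⟨φ, -, hφ_le, hpφ⟩ := exists_eq_one_add_mul_of_half_lt_re hp hp0 hre
  have hz1 : z ∈ ball (0 : ℂ) 1 := mem_ball_zero_iff.mpr (hz.trans_lt (by norm_num))
  refine le_re_pow_three_of_norm_sub_one_le ?_
  calc ‖p z - 1‖ = ‖z‖ * ‖φ z‖ * ‖p z‖ := by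
        rw [← norm_mul, ← norm_mul, sub_eq_of_eq_add' (hpφ z hz1)]
    _ ≤ 1 / 3 * 1 * ‖p z‖ := by gcongr; exact hφ_le z hz1
    _ = ‖p z‖ / 3 := by ring

theorem re_sum_range_taylorCoeff_pow_three_pos_of_four_le (hz : ‖z‖ ≤ 1 / 3) {n : ℕ} (hn : 4 ≤ n) :
    0 < (∑ k ∈ Finset.range n, taylorCoeff (p ^ 3) 0 k * z ^ k).re := by
  have htail := norm_sub_sum_taylorCoeff_le (hp.pow 3)
    (norm_taylorCoeff_pow_three_le hp hp0 hre) (by norm_num)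
    ((sub_zero z).symm ▸ hz) n
  have hmono : ∑ k ∈ Finset.range 4, ((2 + k).choose 2 : ℝ) * (1 / 3) ^ k ≤
      ∑ k ∈ Finset.range n, ((2 + k).choose 2 : ℝ) * (1 / 3) ^ k :=
    Finset.sum_le_sum_of_subset_of_nonneg (Finset.range_mono hn) fun _ _ _ ↦ by positivity
  have hfour : ∑ k ∈ Finset.range 4, ((2 + k).choose 2 : ℝ) * (1 / 3) ^ k = 82 / 27 := by
    norm_num [Finset.sum_range_succ, Nat.choose]
  have hre_sub := re_le_norm ((p ^ 3) z - ∑ k ∈ Finset.range n, taylorCoeff (p ^ 3) 0 k * z ^ k)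
  have hcube := le_re_pow_three_of_norm_le hp hp0 hre hz
  rw [sub_re, Pi.pow_apply] at hre_sub
  simp only [sub_zero, Pi.pow_apply] at htail
  have hmajorant : (1 : ℝ) / (1 - 1 / 3) ^ (2 + 1) = 27 / 8 := by norm_num
  rw [hmajorant] at htail
  linarith

theorem re_sum_range_taylorCoeff_pow_three_pos (hz : ‖z‖ < 1 / 3) {n : ℕ} (hn : 2 ≤ n) :
    0 < (∑ k ∈ Finset.range n, taylorCoeff (p ^ 3) 0 k * z ^ k).re := by
  obtain rfl | rfl | hn4 : n = 2 ∨ n = 3 ∨ 4 ≤ n := by lia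
  · exact re_sum_range_two_taylorCoeff_pow_three_pos hp hp0 hre hz
  · exact re_sum_range_three_taylorCoeff_pow_three_pos hp hp0 hre hz
  · exact re_sum_range_taylorCoeff_pow_three_pos_of_four_le hp hp0 hre hz.le hn4

end CubeOfHalfPlaneFunction

theorem hasDerivAt_sectionF (f : ℂ → ℂ) (n : ℕ) (z : ℂ) :
    HasDerivAt (sectionF f n)
      (∑ k ∈ Finset.range n, taylorCoeff (deriv f) 0 k * z ^ k) z := by
  have hsection : sectionF f n =
      fun z ↦ ∑ k ∈ Finset.range n, taylorCoeff f 0 (k + 1) * z ^ (k + 1) := by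
    ext w
    rw [Finset.range_eq_Ico, Finset.sum_Ico_add' (fun k ↦ taylorCoeff f 0 k * w ^ k) 0 n 1]
    rfl
  rw [hsection]
  refine HasDerivAt.fun_sum fun k _ ↦
    ((hasDerivAt_pow (k + 1) z).const_mul _).congr_deriv ?_
  have hfac : (k.factorial : ℂ) ≠ 0 := mod_cast k.factorial_ne_zero
  have hk : (k : ℂ) + 1 ≠ 0 := mod_cast k.succ_ne_zero
  rw [taylorCoeff, taylorCoeff, iteratedDeriv_succ', Nat.factorial_succ]
  push_cast
  field_simp

theorem section_injOn (f : ℂ → ℂ) (hf : IsInClassF f) (n : ℕ) (hn : 2 ≤ n) :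
    Set.InjOn (sectionF f n) (ball (0 : ℂ) (1/3)) := by
  obtain ⟨p, hp, hp0, hre, hpf⟩ := hf.exists_cube_root
  have hcoeff : ∀ k, taylorCoeff (deriv f) 0 k = taylorCoeff (p ^ 3) 0 k :=
    taylorCoeff_congr (hpf.symm.eventuallyEq_of_mem (ball_mem_nhds 0 one_pos))
  refine injOn_of_re_deriv_pos (convex_ball 0 (1 / 3))
    (fun z _ ↦ (hasDerivAt_sectionF f n z).hasDerivWithinAt) fun z hz ↦ ?_
  simp only [hcoeff]
  exact re_sum_range_taylorCoeff_pow_three_pos hp hp0 hre (mem_ball_zero_iff.mp hz) hn
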